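/- Superadditivity of the quenched pressure under disjoint decomposition: let Λ be a finite set of sites decomposed as a disjoint union Λ = ∪_i Λ_i, let B be a bond set on Λ, and let C ⊆ B be the corridor, i.e. the set of bonds of B joining sites lying in different pieces Λ_i, so that B ∖ C = ∪_i B_i where B_i is the set of bonds of B internal to Λ_i. Then for any x > 0 (all parameters equal to x), P_B ≥ Σ_i P_{B_i}, where P_{B_i} is the quenched pressure of the subsystem (Λ_i, B_i); moreover P_B − Σ_i P_{B_i} ≤ x² |C|. -/

import Mathlib

open MeasureTheory ProbabilityTheory Filter

noncomputable section

/-- The real value ±1 of a Boolean spin. -/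
def spin (s : Bool) : ℝ := if s then 1 else -1

/-- The quenched pressure `[ln Z]` on the Nishimori line of the Gaussian Edwards–Anderson
model with site set `V`, bond set `E` (a finite set of ordered pairs of sites), and all
parameters equal to `x`: the couplings `j_e`, `e ∈ E`, are independent Gaussians of mean `x`
and variance 1, and `Z(j) = Σ_S exp (Σ_{e∈E} x j_e S_{e.1} S_{e.2})`. -/
def EApressure {V : Type*} [Fintype V] [DecidableEq V] (E : Finset (V × V)) (x : ℝ) : ℝ :=
  ∫ j : {e // e ∈ E} → ℝ,
    Real.log (∑ S : V → Bool,
      Real.exp (∑ e : {e // e ∈ E},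
        x * j e * (spin (S (e : V × V).1) * spin (S (e : V × V).2))))
    ∂(Measure.pi fun _ : {e // e ∈ E} => gaussianReal x 1)

/-- The bond set of the subsystem `Λ_i = π⁻¹(i)` of a decomposition `π : V → κ`:
the bonds of `B` both of whose endpoints lie in `Λ_i`. -/
def subBonds {V κ : Type*} [Fintype V] [DecidableEq V] [DecidableEq κ]
    (π : V → κ) (B : Finset (V × V)) (i : κ) :
    Finset ({v // π v = i} × {v // π v = i}) :=
  Finset.univ.filter fun p => ((p.1 : V), (p.2 : V)) ∈ B

/-!
The corridor interaction `U_C` has zero mean in the Gibbs state of the decoupled system, because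
flipping all the spins of one piece preserves the internal bonds and reverses the corridor bonds
which leave that piece; so `Z_B / Z_{B ∖ C} = ⟨exp U_C⟩ ≥ 1 + ⟨U_C⟩ = 1`, whatever the couplings.

For the upper bound write `⟨exp U_C⟩ = exp (∑_{b ∈ C} x_b j_b) ⟨exp (∑_{b ∈ C} x_b j_b (S_b - 1))⟩`.
On the Nishimori line, where the mean of `j_b` is the coefficient `x_b`, each factor
`exp (x_b j_b (S_b - 1))` averages to one. As the corridor couplings are independent of the Gibbs
weights of the decoupled system, the last bracket has mean one, so by `log u ≤ u - 1` it contributes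
nothing, and the prefactor contributes `∑_{b ∈ C} x_b [j_b] = ∑_{b ∈ C} x_b ^ 2`.
-/

namespace SpinGlass

theorem eq_comp_updateFinset_of_dependsOn {ι β : Type*} {Ω : ι → Type*} [DecidableEq ι]
    {f : (∀ i, Ω i) → β} {s : Finset ι} (hf : DependsOn f s) (z : ∀ i, Ω i) :
    f = (f ∘ Function.updateFinset z s) ∘ fun ω i => ω i :=
  funext fun ω => hf fun i hi => by simp [Function.updateFinset, Finset.mem_coe.1 hi]

theorem indepFun_infinitePi_of_dependsOn {ι : Type*} {Ω : ι → Type*} {β γ : Type*}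
    [∀ i, MeasurableSpace (Ω i)] [MeasurableSpace β] [MeasurableSpace γ]
    (P : ∀ i, Measure (Ω i)) [∀ i, IsProbabilityMeasure (P i)]
    {f : (∀ i, Ω i) → β} {g : (∀ i, Ω i) → γ} {s t : Finset ι} (hst : Disjoint s t)
    (hf : Measurable f) (hfs : DependsOn f s) (hg : Measurable g) (hgt : DependsOn g t) :
    IndepFun f g (Measure.infinitePi P) := by
  classical
  obtain ⟨z⟩ := (Measure.infinitePi P).nonempty_of_neZero
  have restrict_indep := (iIndepFun_infinitePi (P := P) (X := fun _ ω => ω)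
    fun _ => measurable_id).indepFun_finset s t hst measurable_pi_apply
  rw [eq_comp_updateFinset_of_dependsOn hfs z, eq_comp_updateFinset_of_dependsOn hgt z]
  exact restrict_indep.comp (hf.comp measurable_updateFinset) (hg.comp measurable_updateFinset)

section PartitionFunction

variable {ι T : Type*}

/-- The energy `∑_{e ∈ E} h_e c_e(t)` of a configuration `t`, where `h e` is the field acting on the
bond `e` and `c t e` is the value of the bond variable `e` in the configuration `t`. With
`h_e = x_e j_e` and `c S e = S_e` it is the potential `U(j, S)` of the paper. -/
def interaction (c : T → ι → ℝ) (h : ι → ℝ) (E : Finset ι) (t : T) : ℝ :=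
  ∑ e ∈ E, h e * c t e

/-- The partition function `Z` of the bonds `E`. -/
def partitionFunction [Fintype T] (c : T → ι → ℝ) (h : ι → ℝ) (E : Finset ι) : ℝ :=
  ∑ t, Real.exp (interaction c h E t)

/-- The Boltzmann–Gibbs probability of the configuration `t` for the bonds `E`. -/
def gibbsWeight [Fintype T] (c : T → ι → ℝ) (h : ι → ℝ) (E : Finset ι) (t : T) : ℝ :=
  Real.exp (interaction c h E t) / partitionFunction c h E

variable (c : T → ι → ℝ) (h : ι → ℝ) (E : Finset ι)

theorem interaction_union [DecidableEq ι] {D C : Finset ι} (hDC : Disjoint D C) (t : T) :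
    interaction c h (D ∪ C) t = interaction c h D t + interaction c h C t :=
  Finset.sum_union hDC

theorem interaction_map {α : Type*} (φ : α ↪ ι) (A : Finset α) (t : T) :
    interaction c h (A.map φ) t = interaction (fun t a => c t (φ a)) (h ∘ φ) A t :=
  Finset.sum_map A φ _

theorem dependsOn_interaction (t : T) : DependsOn (fun h => interaction c h E t) E :=
  fun _ _ hE => Finset.sum_congr rfl fun e he => by rw [hE e he]

@[fun_prop]
theorem measurable_interaction (t : T) : Measurable fun h => interaction c h E t := by
  unfold interaction
  fun_prop

variable {c} in
theorem abs_interaction_le (hc : ∀ t e, |c t e| ≤ 1) (t : T) :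
    |interaction c h E t| ≤ ∑ e ∈ E, |h e| := by
  refine (Finset.abs_sum_le_sum_abs _ _).trans (Finset.sum_le_sum fun e _ => ?_)
  rw [abs_mul]
  exact mul_le_of_le_one_right (abs_nonneg _) (hc t e)

variable [Fintype T]

theorem dependsOn_partitionFunction : DependsOn (fun h => partitionFunction c h E) E :=
  fun _ _ hE => Finset.sum_congr rfl fun t _ => congrArg Real.exp (dependsOn_interaction c E t hE)

theorem dependsOn_gibbsWeight (t : T) : DependsOn (fun h => gibbsWeight c h E t) E :=
  fun _ _ hE => congrArg₂ (Real.exp · / ·) (dependsOn_interaction c E t hE)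
    (dependsOn_partitionFunction c E hE)

@[fun_prop]
theorem measurable_partitionFunction : Measurable fun h => partitionFunction c h E := by
  unfold partitionFunction
  fun_prop

@[fun_prop]
theorem measurable_gibbsWeight (t : T) : Measurable fun h => gibbsWeight c h E t := by
  unfold gibbsWeight
  fun_prop

theorem partitionFunction_map {α : Type*} (φ : α ↪ ι) (A : Finset α) :
    partitionFunction c h (A.map φ) = partitionFunction (fun t a => c t (φ a)) (h ∘ φ) A := by
  simp only [partitionFunction, interaction_map]

theorem exp_interaction_le_partitionFunction (t : T) :
    Real.exp (interaction c h E t) ≤ partitionFunction c h E :=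
  Finset.single_le_sum (f := fun t => Real.exp (interaction c h E t))
    (fun _ _ => (Real.exp_pos _).le) (Finset.mem_univ t)

theorem partitionFunction_nonneg : 0 ≤ partitionFunction c h E :=
  Finset.sum_nonneg fun _ _ => (Real.exp_pos _).le

theorem partitionFunction_pos [Nonempty T] : 0 < partitionFunction c h E :=
  Finset.sum_pos (fun _ _ => Real.exp_pos _) Finset.univ_nonempty

theorem gibbsWeight_nonneg (t : T) : 0 ≤ gibbsWeight c h E t :=
  div_nonneg (Real.exp_pos _).le (partitionFunction_nonneg c h E)

theorem gibbsWeight_le_one (t : T) : gibbsWeight c h E t ≤ 1 :=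
  div_le_one_of_le₀ (exp_interaction_le_partitionFunction c h E t)
    (partitionFunction_nonneg c h E)

theorem sum_gibbsWeight [Nonempty T] : ∑ t, gibbsWeight c h E t = 1 := by
  simp only [gibbsWeight, ← Finset.sum_div]
  exact div_self (partitionFunction_pos c h E).ne'

variable {c} in
theorem abs_log_partitionFunction_le [Nonempty T] (hc : ∀ t e, |c t e| ≤ 1) :
    |Real.log (partitionFunction c h E)| ≤ Real.log (Fintype.card T) + ∑ e ∈ E, |h e| := by
  have card_pos : (0 : ℝ) < Fintype.card T := by exact_mod_cast Fintype.card_pos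
  have log_card_nonneg : 0 ≤ Real.log (Fintype.card T) := Real.log_natCast_nonneg _
  have energy_bounds t := abs_le.1 (abs_interaction_le h E hc t)
  rw [abs_le, Real.le_log_iff_exp_le (partitionFunction_pos c h E),
    Real.log_le_iff_le_exp (partitionFunction_pos c h E), Real.exp_add, Real.exp_log card_pos]
  constructor
  · obtain ⟨t⟩ := ‹Nonempty T›
    refine le_trans (Real.exp_le_exp.2 ?_) (exp_interaction_le_partitionFunction c h E t)
    linarith [(energy_bounds t).1]
  · simpa [partitionFunction] using Finset.sum_le_card_nsmul Finset.univ _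
      (Real.exp (∑ e ∈ E, |h e|)) fun t _ => Real.exp_le_exp.2 (energy_bounds t).2

theorem partitionFunction_union_div [DecidableEq ι] {D C : Finset ι} (hDC : Disjoint D C) :
    partitionFunction c h (D ∪ C) / partitionFunction c h D =
      ∑ t, gibbsWeight c h D t * Real.exp (interaction c h C t) := by
  simp only [gibbsWeight, div_mul_eq_mul_div, ← Real.exp_add, ← interaction_union c h hDC,
    ← Finset.sum_div]
  rfl

theorem log_partitionFunction_union_sub_le [DecidableEq ι] [Nonempty T] {D C : Finset ι}
    (hDC : Disjoint D C) :
    Real.log (partitionFunction c h (D ∪ C)) - Real.log (partitionFunction c h D) ≤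
      ∑ e ∈ C, h e +
        (∑ t, gibbsWeight c h D t * Real.exp (∑ e ∈ C, h e * (c t e - 1)) - 1) := by
  set a := ∑ e ∈ C, h e
  have shift t : Real.exp (∑ e ∈ C, h e * (c t e - 1)) =
      Real.exp (interaction c h C t) * Real.exp (-a) := by
    rw [← Real.exp_add, interaction, ← sub_eq_add_neg, ← Finset.sum_sub_distrib]
    simp only [mul_sub_one]
  have ratio_pos : 0 < partitionFunction c h (D ∪ C) / partitionFunction c h D :=
    div_pos (partitionFunction_pos c h _) (partitionFunction_pos c h _)
  have log_le := Real.log_le_sub_one_of_pos (mul_pos ratio_pos (Real.exp_pos (-a)))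
  rw [Real.log_mul ratio_pos.ne' (Real.exp_pos _).ne', Real.log_exp,
    Real.log_div (partitionFunction_pos c h _).ne' (partitionFunction_pos c h _).ne',
    partitionFunction_union_div c h hDC] at log_le
  simp only [shift, ← mul_assoc, ← Finset.sum_mul]
  linarith

variable {c} in
theorem sum_exp_interaction_mul_eq_zero {E : Finset ι} {b : ι} (τ : T ≃ T)
    (hτE : ∀ e ∈ E, ∀ t, c (τ t) e = c t e) (hτb : ∀ t, c (τ t) b = -c t b) :
    ∑ t, Real.exp (interaction c h E t) * c t b = 0 := by
  have energy_invariant t : interaction c h E (τ t) = interaction c h E t :=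
    Finset.sum_congr rfl fun e he => by rw [hτE e he]
  have odd := Equiv.sum_comp τ fun t => Real.exp (interaction c h E t) * c t b
  simp only [energy_invariant, hτb, mul_neg, Finset.sum_neg_distrib] at odd
  linarith

variable {c} in
theorem partitionFunction_le_union [DecidableEq ι] {D C : Finset ι} (hDC : Disjoint D C)
    (hC : ∀ b ∈ C, ∑ t, Real.exp (interaction c h D t) * c t b = 0) :
    partitionFunction c h D ≤ partitionFunction c h (D ∪ C) := by
  have mean_zero : ∑ t, Real.exp (interaction c h D t) * interaction c h C t = 0 := by
    simp only [interaction.eq_1 c h C, Finset.mul_sum, mul_left_comm _ (h _)]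
    rw [Finset.sum_comm]
    simp only [← Finset.mul_sum]
    exact Finset.sum_eq_zero fun b hb => by rw [hC b hb, mul_zero]
  calc partitionFunction c h D
      = ∑ t, Real.exp (interaction c h D t) * (interaction c h C t + 1) := by
        simp only [mul_add_one, Finset.sum_add_distrib, mean_zero, zero_add, partitionFunction]
    _ ≤ ∑ t, Real.exp (interaction c h D t) * Real.exp (interaction c h C t) := by
        gcongr
        exact Real.add_one_le_exp _
    _ = partitionFunction c h (D ∪ C) := by
        simp only [partitionFunction, interaction_union c h hDC, Real.exp_add]

end PartitionFunction

section NishimoriMeasure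

variable {ι : Type*} (x : ι → ℝ)

/-- The law of the couplings on the Nishimori line: independent Gaussians of variance 1, whose
means are the coefficients `x` that multiply the couplings in the potential. -/
def nishimoriMeasure : Measure (ι → ℝ) :=
  Measure.infinitePi fun i => gaussianReal (x i) 1

instance : IsProbabilityMeasure (nishimoriMeasure x) := by
  unfold nishimoriMeasure
  infer_instance

theorem measurePreserving_comp_nishimoriMeasure {α : Type*} (φ : α ↪ ι) :
    MeasurePreserving (fun j : ι → ℝ => j ∘ φ) (nishimoriMeasure x) (nishimoriMeasure (x ∘ φ)) :=
  ⟨by fun_prop, Measure.map_infinitePi_infinitePi_of_inj φ.injective⟩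

theorem map_eval_nishimoriMeasure (i : ι) :
    (nishimoriMeasure x).map (fun j => j i) = gaussianReal (x i) 1 :=
  Measure.infinitePi_map_eval (fun i => gaussianReal (x i) 1) i

theorem integrable_eval_nishimoriMeasure (i : ι) :
    Integrable (fun j => j i) (nishimoriMeasure x) := by
  have integrable_id : Integrable id (gaussianReal (x i) 1) :=
    memLp_one_iff_integrable.1 (memLp_id_gaussianReal 1)
  rw [← map_eval_nishimoriMeasure x i] at integrable_id
  exact integrable_id.comp_measurable (measurable_pi_apply i)

theorem integral_eval_nishimoriMeasure (i : ι) : ∫ j, j i ∂nishimoriMeasure x = x i := by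
  rw [← integral_id_gaussianReal (μ := x i) (v := 1), ← map_eval_nishimoriMeasure x i,
    integral_map (measurable_pi_apply i).aemeasurable (by fun_prop)]

theorem integrable_sum_mul_eval_nishimoriMeasure (E : Finset ι) :
    Integrable (fun j => ∑ e ∈ E, (x * j) e) (nishimoriMeasure x) :=
  integrable_finsetSum _ fun e _ => (integrable_eval_nishimoriMeasure x e).const_mul (x e)

theorem integral_sum_mul_eval_nishimoriMeasure (E : Finset ι) :
    ∫ j, ∑ e ∈ E, (x * j) e ∂nishimoriMeasure x = ∑ e ∈ E, x e ^ 2 := by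
  simp only [Pi.mul_apply]
  rw [integral_finsetSum _ fun e _ => (integrable_eval_nishimoriMeasure x e).const_mul (x e)]
  simp only [integral_const_mul, integral_eval_nishimoriMeasure, sq]

theorem iIndepFun_mul_eval_nishimoriMeasure (a : ι → ℝ) :
    iIndepFun (fun i (j : ι → ℝ) => a i * j i) (nishimoriMeasure x) :=
  iIndepFun_infinitePi (X := fun i y => a i * y) fun i => measurable_const_mul (a i)

theorem integrable_exp_sum_nishimoriMeasure (a : ι → ℝ) (E : Finset ι) :
    Integrable (fun j => Real.exp (∑ e ∈ E, a e * j e)) (nishimoriMeasure x) := by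
  have factor_integrable e : Integrable (fun j : ι → ℝ => Real.exp (1 * (a e * j e)))
      (nishimoriMeasure x) := by
    simp only [one_mul]
    have gaussian_integrable := integrable_exp_mul_gaussianReal (μ := x e) (v := 1) (a e)
    rw [← map_eval_nishimoriMeasure x e] at gaussian_integrable
    exact gaussian_integrable.comp_measurable (measurable_pi_apply e)
  simpa using (iIndepFun_mul_eval_nishimoriMeasure x a).integrable_exp_mul_sum
    (fun e => by fun_prop) (s := E) fun e _ => factor_integrable e

theorem integral_exp_sum_nishimoriMeasure (a : ι → ℝ) (E : Finset ι) :
    ∫ j, Real.exp (∑ e ∈ E, a e * j e) ∂nishimoriMeasure x =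
      Real.exp (∑ e ∈ E, (x e * a e + a e ^ 2 / 2)) := by
  calc ∫ j, Real.exp (∑ e ∈ E, a e * j e) ∂nishimoriMeasure x
      = mgf (∑ e ∈ E, fun j => a e * j e) (nishimoriMeasure x) 1 := by simp [mgf]
    _ = ∏ e ∈ E, mgf (fun j => a e * j e) (nishimoriMeasure x) 1 :=
        (iIndepFun_mul_eval_nishimoriMeasure x a).mgf_sum (fun e => by fun_prop) E
    _ = ∏ e ∈ E, Real.exp (x e * a e + a e ^ 2 / 2) :=
        Finset.prod_congr rfl fun e _ => by
          rw [mgf_const_mul, mgf_gaussianReal (map_eval_nishimoriMeasure x e)]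
          simp
    _ = _ := (Real.exp_sum _ _).symm

theorem integrable_exp_sum_mul_sub_one (s : ι → ℝ) (E : Finset ι) :
    Integrable (fun j => Real.exp (∑ e ∈ E, (x * j) e * (s e - 1))) (nishimoriMeasure x) := by
  simpa only [Pi.mul_apply, mul_right_comm] using
    integrable_exp_sum_nishimoriMeasure x (fun e => x e * (s e - 1)) E

theorem integral_exp_sum_mul_sub_one_le_one {s : ι → ℝ} (hs : ∀ e, |s e| ≤ 1) (E : Finset ι) :
    ∫ j, Real.exp (∑ e ∈ E, (x * j) e * (s e - 1)) ∂nishimoriMeasure x ≤ 1 := by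
  have regroup (j : ι → ℝ) :
      ∑ e ∈ E, (x * j) e * (s e - 1) = ∑ e ∈ E, x e * (s e - 1) * j e :=
    Finset.sum_congr rfl fun e _ => mul_right_comm _ _ _
  simp only [regroup]
  rw [integral_exp_sum_nishimoriMeasure, Real.exp_le_one_iff]
  refine Finset.sum_nonpos fun e _ => ?_
  calc x e * (x e * (s e - 1)) + (x e * (s e - 1)) ^ 2 / 2
      = x e ^ 2 / 2 * (s e ^ 2 - 1) := by ring
    _ ≤ 0 := mul_nonpos_of_nonneg_of_nonpos (by positivity)
        (sub_nonpos.2 ((sq_le_one_iff_abs_le_one _).2 (hs e)))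

variable {x} {w : (ι → ℝ) → ℝ} {D C : Finset ι} {s : ι → ℝ}

theorem indepFun_exp_sum_mul_sub_one (hDC : Disjoint D C) (hw : Measurable w)
    (hwD : DependsOn w D) :
    IndepFun w (fun j => Real.exp (∑ e ∈ C, (x * j) e * (s e - 1))) (nishimoriMeasure x) :=
  indepFun_infinitePi_of_dependsOn _ hDC hw hwD (by simp only [Pi.mul_apply]; fun_prop)
    fun _ _ hC => congrArg Real.exp <| Finset.sum_congr rfl fun e he => by
      simp only [Pi.mul_apply, hC e he]

theorem integrable_mul_exp_sum_mul_sub_one (hDC : Disjoint D C) (hw : Measurable w)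
    (hwD : DependsOn w D) (hwi : Integrable w (nishimoriMeasure x)) :
    Integrable (fun j => w j * Real.exp (∑ e ∈ C, (x * j) e * (s e - 1))) (nishimoriMeasure x) :=
  (indepFun_exp_sum_mul_sub_one hDC hw hwD).integrable_mul hwi
    (integrable_exp_sum_mul_sub_one x s C)

theorem integral_mul_exp_sum_mul_sub_one_le (hDC : Disjoint D C) (hw : Measurable w)
    (hwD : DependsOn w D) (hw0 : 0 ≤ w) (hs : ∀ e, |s e| ≤ 1) :
    ∫ j, w j * Real.exp (∑ e ∈ C, (x * j) e * (s e - 1)) ∂nishimoriMeasure x ≤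
      ∫ j, w j ∂nishimoriMeasure x := by
  rw [(indepFun_exp_sum_mul_sub_one hDC hw hwD).integral_fun_mul_eq_mul_integral
    hw.aestronglyMeasurable (integrable_exp_sum_mul_sub_one x s C).aestronglyMeasurable]
  exact mul_le_of_le_one_right (integral_nonneg hw0) (integral_exp_sum_mul_sub_one_le_one x hs C)

end NishimoriMeasure

section QuenchedPressure

variable {ι T : Type*} [Fintype T] {c : T → ι → ℝ} {x : ι → ℝ} {D C : Finset ι}

/-- The quenched pressure `P_E({x}) = [ln Z]` of the bonds `E` on the Nishimori line. The average
is over the couplings of all the bonds in `ι`; those outside `E` do not enter. -/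
def quenchedPressure (c : T → ι → ℝ) (x : ι → ℝ) (E : Finset ι) : ℝ :=
  ∫ j, Real.log (partitionFunction c (x * j) E) ∂nishimoriMeasure x

variable (x) in
theorem integrable_log_partitionFunction [Nonempty T] (hc : ∀ t e, |c t e| ≤ 1) (E : Finset ι) :
    Integrable (fun j => Real.log (partitionFunction c (x * j) E)) (nishimoriMeasure x) := by
  have bound_integrable : Integrable (fun j : ι → ℝ =>
      Real.log (Fintype.card T) + ∑ e ∈ E, |(x * j) e|) (nishimoriMeasure x) :=
    (integrable_const _).add <| integrable_finsetSum _ fun e _ =>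
      ((integrable_eval_nishimoriMeasure x e).const_mul (x e)).abs
  refine bound_integrable.mono' (Measurable.aestronglyMeasurable (by fun_prop))
    (ae_of_all _ fun j => ?_)
  exact abs_log_partitionFunction_le (x * j) E hc

theorem integrable_log_partitionFunction_comp [Nonempty T] {α : Type*} (φ : α ↪ ι)
    {c : T → α → ℝ} (hc : ∀ t a, |c t a| ≤ 1) (x : ι → ℝ) (A : Finset α) :
    Integrable (fun j => Real.log (partitionFunction c ((x * j) ∘ φ) A)) (nishimoriMeasure x) :=
  (measurePreserving_comp_nishimoriMeasure x φ).integrable_comp_of_integrable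
    (integrable_log_partitionFunction (x ∘ φ) hc A)

theorem integral_log_partitionFunction_comp {α : Type*} (φ : α ↪ ι) (c : T → α → ℝ) (x : ι → ℝ)
    (A : Finset α) :
    ∫ j, Real.log (partitionFunction c ((x * j) ∘ φ) A) ∂nishimoriMeasure x =
      quenchedPressure c (x ∘ φ) A := by
  have reindex := measurePreserving_comp_nishimoriMeasure x φ
  rw [quenchedPressure, ← reindex.map_eq, integral_map reindex.aemeasurable
    (Measurable.aestronglyMeasurable (by fun_prop))]
  rfl

theorem quenchedPressure_map (c : T → ι → ℝ) (x : ι → ℝ) {α : Type*} (φ : α ↪ ι) (A : Finset α) :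
    quenchedPressure c x (A.map φ) = quenchedPressure (fun t a => c t (φ a)) (x ∘ φ) A := by
  rw [← integral_log_partitionFunction_comp]
  simp only [quenchedPressure, partitionFunction_map]

theorem quenchedPressure_le_union [DecidableEq ι] [Nonempty T] (hc : ∀ t e, |c t e| ≤ 1)
    (hDC : Disjoint D C)
    (hC : ∀ b ∈ C, ∃ τ : T ≃ T, (∀ e ∈ D, ∀ t, c (τ t) e = c t e) ∧ ∀ t, c (τ t) b = -c t b) :
    quenchedPressure c x D ≤ quenchedPressure c x (D ∪ C) := by
  refine integral_mono (integrable_log_partitionFunction x hc _)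
    (integrable_log_partitionFunction x hc _) fun j =>
      Real.log_le_log (partitionFunction_pos _ _ _)
        (partitionFunction_le_union _ hDC fun b hb => ?_)
  obtain ⟨τ, hτD, hτb⟩ := hC b hb
  exact sum_exp_interaction_mul_eq_zero _ τ hτD hτb

theorem dependsOn_gibbsWeight_mul (t : T) :
    DependsOn (fun j => gibbsWeight c (x * j) D t) D :=
  fun _ _ hD => dependsOn_gibbsWeight c D t fun e he => by simp only [Pi.mul_apply, hD e he]

theorem integrable_gibbsWeight_mul (t : T) :
    Integrable (fun j => gibbsWeight c (x * j) D t) (nishimoriMeasure x) :=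
  .of_mem_Icc 0 1 (Measurable.aemeasurable (by fun_prop))
    (ae_of_all _ fun _ => ⟨gibbsWeight_nonneg _ _ _ t, gibbsWeight_le_one _ _ _ t⟩)

theorem integrable_gibbsWeight_mul_exp (hDC : Disjoint D C) (t : T) :
    Integrable (fun j => gibbsWeight c (x * j) D t *
      Real.exp (∑ e ∈ C, (x * j) e * (c t e - 1))) (nishimoriMeasure x) :=
  integrable_mul_exp_sum_mul_sub_one hDC (by fun_prop)
    (dependsOn_gibbsWeight_mul t) (integrable_gibbsWeight_mul t)

theorem integral_sum_gibbsWeight_mul_exp_le_one [Nonempty T] (hc : ∀ t e, |c t e| ≤ 1)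
    (hDC : Disjoint D C) :
    ∫ j, ∑ t, gibbsWeight c (x * j) D t *
      Real.exp (∑ e ∈ C, (x * j) e * (c t e - 1)) ∂nishimoriMeasure x ≤ 1 := by
  rw [integral_finsetSum _ fun t _ => integrable_gibbsWeight_mul_exp hDC t]
  calc _ ≤ ∑ t, ∫ j, gibbsWeight c (x * j) D t ∂nishimoriMeasure x :=
        Finset.sum_le_sum fun t _ => integral_mul_exp_sum_mul_sub_one_le hDC
          (by fun_prop) (dependsOn_gibbsWeight_mul t)
          (fun _ => gibbsWeight_nonneg _ _ _ t) (hc t)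
    _ = ∫ j, ∑ t, gibbsWeight c (x * j) D t ∂nishimoriMeasure x :=
        (integral_finsetSum _ fun t _ => integrable_gibbsWeight_mul t).symm
    _ = 1 := by simp [sum_gibbsWeight]

theorem quenchedPressure_union_sub_le [DecidableEq ι] [Nonempty T] (hc : ∀ t e, |c t e| ≤ 1)
    (hDC : Disjoint D C) :
    quenchedPressure c x (D ∪ C) - quenchedPressure c x D ≤ ∑ e ∈ C, x e ^ 2 := by
  have log_integrable := integrable_log_partitionFunction x hc
  have field_integrable := integrable_sum_mul_eval_nishimoriMeasure x C
  have weight_integrable := integrable_finsetSum Finset.univ fun t _ =>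
    integrable_gibbsWeight_mul_exp (c := c) (x := x) hDC t
  rw [quenchedPressure, quenchedPressure,
    ← integral_sub (log_integrable (D ∪ C)) (log_integrable D)]
  refine (integral_mono ((log_integrable _).sub (log_integrable _))
    (field_integrable.add (weight_integrable.sub (integrable_const 1)))
    fun j => log_partitionFunction_union_sub_le c (x * j) hDC).trans ?_
  rw [integral_add' field_integrable (weight_integrable.sub (integrable_const 1)),
    integral_sub' weight_integrable (integrable_const 1), integral_sum_mul_eval_nishimoriMeasure]
  have weight_le := integral_sum_gibbsWeight_mul_exp_le_one (x := x) hc hDC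
  simp only [integral_const, probReal_univ, smul_eq_mul]
  linarith

end QuenchedPressure

section EdwardsAnderson

variable {V κ : Type*}

/-- The bond variable `S_b = S_n S_{n'}` of the bond `b = (n, n')`. -/
def bondSpin (S : V → Bool) (b : V × V) : ℝ :=
  spin (S b.1) * spin (S b.2)

theorem spin_not (s : Bool) : spin (!s) = -spin s := by
  cases s <;> simp [spin]

theorem abs_spin (s : Bool) : |spin s| = 1 := by
  cases s <;> simp [spin]

theorem abs_bondSpin_le_one (S : V → Bool) (b : V × V) : |bondSpin S b| ≤ 1 := by
  simp [bondSpin, abs_mul, abs_spin]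

theorem EApressure_eq_quenchedPressure [Fintype V] [DecidableEq V] (E : Finset (V × V)) (x : ℝ) :
    EApressure E x = quenchedPressure bondSpin (fun _ => x) E := by
  conv_rhs => rw [← Finset.attach_map_val (s := E), quenchedPressure_map]
  simp only [quenchedPressure, nishimoriMeasure, Measure.infinitePi_eq_pi]
  rfl

variable [DecidableEq κ] (π : V → κ)

/-- The bonds of `B` internal to one of the pieces `Λ_i = π⁻¹(i)`: the set `B ∖ C`. -/
def internalBonds (B : Finset (V × V)) : Finset (V × V) :=
  B.filter fun b => π b.1 = π b.2

/-- The corridor `C`: the bonds of `B` joining sites of different pieces. -/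
def corridor (B : Finset (V × V)) : Finset (V × V) :=
  B.filter fun b => π b.1 ≠ π b.2

theorem disjoint_internalBonds_corridor (B : Finset (V × V)) :
    Disjoint (internalBonds π B) (corridor π B) :=
  Finset.disjoint_filter_filter_not B B _

theorem internalBonds_union_corridor [DecidableEq V] (B : Finset (V × V)) :
    internalBonds π B ∪ corridor π B = B :=
  Finset.filter_union_filter_not_eq _ B

/-- The spin-flip symmetry of the piece `Λ_i`: it reverses the spins in `Λ_i` and no others. -/
def flipPiece (i : κ) : (V → Bool) ≃ (V → Bool) :=
  Equiv.piCongrRight fun v => if π v = i then Equiv.boolNot else Equiv.refl Bool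

theorem spin_flipPiece (i : κ) (S : V → Bool) (v : V) :
    spin (flipPiece π i S v) = if π v = i then -spin (S v) else spin (S v) := by
  by_cases hv : π v = i <;> simp [flipPiece, hv, spin_not]

theorem bondSpin_flipPiece_of_eq (i : κ) (S : V → Bool) {b : V × V} (hb : π b.1 = π b.2) :
    bondSpin (flipPiece π i S) b = bondSpin S b := by
  by_cases hi : π b.2 = i <;> simp [bondSpin, spin_flipPiece, hb, hi]

theorem bondSpin_flipPiece_of_ne (S : V → Bool) {b : V × V} (hb : π b.1 ≠ π b.2) :
    bondSpin (flipPiece π (π b.1) S) b = -bondSpin S b := by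
  simp [bondSpin, spin_flipPiece, hb.symm]

/-- The inclusion of the pairs of sites of the piece `Λ_i` into the pairs of sites of `Λ`. -/
def pieceEmbedding (i : κ) : {v // π v = i} × {v // π v = i} ↪ V × V :=
  (Function.Embedding.subtype _).prodMap (Function.Embedding.subtype _)

theorem map_pieceEmbedding_subBonds [Fintype V] [DecidableEq V] (B : Finset (V × V)) (i : κ) :
    (subBonds π B i).map (pieceEmbedding π i) =
      (internalBonds π B).filter fun b => π b.1 = i := by
  ext ⟨v, w⟩
  simp only [subBonds, internalBonds, pieceEmbedding, Finset.mem_map, Finset.mem_filter,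
    Finset.mem_univ, true_and, Prod.exists, Subtype.exists]
  constructor
  · rintro ⟨v, rfl, w, hw, hB, ⟨⟩⟩
    exact ⟨⟨hB, hw.symm⟩, rfl⟩
  · rintro ⟨⟨hB, hvw⟩, hv⟩
    exact ⟨v, hv, w, hvw.symm.trans hv, hB, rfl⟩

variable [Fintype V] [DecidableEq V] [Fintype κ]

theorem interaction_internalBonds (B : Finset (V × V)) (h : V × V → ℝ) (S : V → Bool) :
    interaction bondSpin h (internalBonds π B) S =
      ∑ i, interaction bondSpin (h ∘ pieceEmbedding π i) (subBonds π B i) fun v => S v := by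
  calc interaction bondSpin h (internalBonds π B) S
      = ∑ i, interaction bondSpin h ((internalBonds π B).filter fun b => π b.1 = i) S :=
        (Finset.sum_fiberwise _ (fun b : V × V => π b.1) _).symm
    _ = _ := Finset.sum_congr rfl fun i _ => by
        rw [← map_pieceEmbedding_subBonds, interaction_map]
        rfl

theorem partitionFunction_internalBonds (B : Finset (V × V)) (h : V × V → ℝ) :
    partitionFunction bondSpin h (internalBonds π B) =
      ∏ i, partitionFunction bondSpin (h ∘ pieceEmbedding π i) (subBonds π B i) := by
  let restrictToPieces : (V → Bool) ≃ ∀ i, {v // π v = i} → Bool :=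
    ((Equiv.sigmaFiberEquiv π).symm.arrowCongr (Equiv.refl Bool)).trans
      (Equiv.piCurry fun i (_ : {v // π v = i}) => Bool)
  simp only [partitionFunction]
  rw [Finset.prod_univ_sum, Fintype.piFinset_univ]
  refine Fintype.sum_equiv restrictToPieces _ _ fun S => ?_
  rw [interaction_internalBonds, Real.exp_sum]
  rfl

theorem quenchedPressure_internalBonds (B : Finset (V × V)) (x : V × V → ℝ) :
    quenchedPressure bondSpin x (internalBonds π B) =
      ∑ i, quenchedPressure bondSpin (x ∘ pieceEmbedding π i) (subBonds π B i) := by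
  simp only [quenchedPressure.eq_1 bondSpin x, partitionFunction_internalBonds,
    Real.log_prod fun _ _ => (partitionFunction_pos _ _ _).ne']
  rw [integral_finsetSum _ fun i _ =>
    integrable_log_partitionFunction_comp _ abs_bondSpin_le_one x _]
  simp only [integral_log_partitionFunction_comp]

end EdwardsAnderson

end SpinGlass

open SpinGlass in
theorem pressure_superadditive_decomposition_general
    {V κ : Type*} [Fintype V] [DecidableEq V] [Fintype κ] [DecidableEq κ]
    (π : V → κ) (B : Finset (V × V)) (x : V × V → ℝ) :
    (∑ i, quenchedPressure bondSpin (x ∘ pieceEmbedding π i) (subBonds π B i)) ≤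
        quenchedPressure bondSpin x B ∧
      quenchedPressure bondSpin x B -
          (∑ i, quenchedPressure bondSpin (x ∘ pieceEmbedding π i) (subBonds π B i)) ≤
        ∑ b ∈ corridor π B, x b ^ 2 := by
  rw [← quenchedPressure_internalBonds]
  have disjoint := disjoint_internalBonds_corridor π B
  have lower := quenchedPressure_le_union (x := x) abs_bondSpin_le_one disjoint fun b hb =>
    ⟨flipPiece π (π b.1),
      fun e he S => bondSpin_flipPiece_of_eq π _ S (Finset.mem_filter.1 he).2,
      fun S => bondSpin_flipPiece_of_ne π S (Finset.mem_filter.1 hb).2⟩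
  have upper := quenchedPressure_union_sub_le (x := x) abs_bondSpin_le_one disjoint
  rw [internalBonds_union_corridor] at lower upper
  exact ⟨lower, upper⟩

/-- Superadditivity of the quenched pressure under disjoint
decomposition: for a finite site set `V` decomposed into the disjoint pieces
`Λ_i = π⁻¹(i)`, `i ∈ κ`, a bond set `B` on `V`, and the corridor
`C = {b ∈ B | the endpoints of b lie in different pieces}`, one has (all parameters equal
to `x > 0`) `P_B ≥ Σ_i P_{B_i}` where `B_i` is the set of bonds of `B` internal to `Λ_i`,
and moreover `P_B − Σ_i P_{B_i} ≤ x² |C|`. -/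
theorem pressure_superadditive_decomposition
    {V κ : Type*} [Fintype V] [DecidableEq V] [Fintype κ] [DecidableEq κ]
    (π : V → κ) (B : Finset (V × V)) (hB : ∀ p ∈ B, p.1 ≠ p.2) (x : ℝ) (hx : 0 < x) :
    (∑ i : κ, EApressure (subBonds π B i) x) ≤ EApressure B x ∧
      EApressure B x - (∑ i : κ, EApressure (subBonds π B i) x) ≤
        x ^ 2 * ((B.filter fun p => π p.1 ≠ π p.2).card : ℝ) := by
  simp only [SpinGlass.EApressure_eq_quenchedPressure]
  simpa [SpinGlass.corridor, Function.comp_def, mul_comm] using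
    pressure_superadditive_decomposition_general π B fun _ => x

end
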